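/- Let κ be an uncountable cardinal with κ^{<κ} = κ, let X ⊆ κ be a stationary set such that ◇_κ(X) holds, and let T be a complete first-order theory in a countable relational vocabulary such that for all models 𝒜, ℬ of T with domain κ: 𝒜 ≅ ℬ if and only if player II has a winning strategy in the game EF^κ_ω(𝒜,ℬ), and 𝒜 ≇ ℬ if and only if player I has a winning strategy in EF^κ_ω(𝒜,ℬ) (by Shelah's work, every classifiable theory has this property). Then the isomorphism relation ≅^κ_T is continuously reducible to E_X. -/

import Mathlib

/-!
The reduction sends `η` to the point whose `α`-th bit says whether `𝒜_η↾α` and the guessed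
structure `𝒜_{S_α}↾α` are both models of `T` and isomorphic, where `(S_α)` is the diamond sequence.
Each bit depends on boundedly much of `η`, so the map is continuous (`continuous_reduction`).

The isomorphisms allowed at `α` must be restricted: a winning strategy for player I on `κ` need
not say anything about arbitrary isomorphisms from `𝒜_η↾α` to `𝒜_ξ↾α`, since infinitely large
pieces of such a map may lie outside every family under which `α` can be closed. As `κ^{<κ} = κ`,
fix an enumeration `e` of the subsets of `κ × κ` of size `< κ` (`exists_enum`), and call a
permutation `h` of `κ` amenable at `α` if it preserves `α` and composition with `h` and with `h⁻¹`
preserves the family `{e γ | γ < α}` (`Amen`). Amenable maps form a group, so being amenably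
isomorphic at `α` is an equivalence relation on structures, and the following hold on a club of
`α`:

* `𝒜↾α` is an elementary substructure of `𝒜` (`clubEv_restrModel`), so that it models `T` iff `𝒜`
  does;
* a given global isomorphism is amenable at `α` (`clubEv_amenIso`), so isomorphic models have
  images that agree on a club;
* if player I wins `EF^κ_ω(𝒜, ℬ)`, then no isomorphism from `𝒜↾α` to `ℬ↾α` is amenable
  (`clubEv_not_amenIso`), since by amenability player II could play along such a map against
  the strategy of player I while all moves stay below `α`.

If `𝒜_η ⊨ T` and `𝒜_ξ` is either not a model of `T` or a model not isomorphic to `𝒜_η`, then at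
every correct guess of `η` in a suitable club the bit of `η` is `1` and that of `ξ` is `0`, and
these guesses are stationary (`not_EX_of_clubEv`). Clubs are handled throughout as sets of
closure points of finitary functions (`ClubEv`).
-/

/-!
Statement 0: If `κ` is an uncountable cardinal with `κ^{<κ} = κ`, `X ⊆ κ` is stationary,
`◇_κ(X)` holds, and `T` is a complete first-order theory in a countable relational
vocabulary such that isomorphism of models of `T` with domain `κ` coincides with player II
winning `EF^κ_ω`, and non-isomorphism with player I winning (as holds for classifiable `T`),
then `≅^κ_T` is continuously reducible to `E_X`.
-/

noncomputable section

open Cardinal Set FirstOrder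

namespace GenCantor

/-- The set of ordinals below `κ`, used as the domain `κ` of coded structures. -/
abbrev O (κ : Cardinal.{0}) : Type 1 := ↥(Set.Iio κ.ord)

/-- The generalized Cantor space `2^κ`. -/
abbrev Point (κ : Cardinal.{0}) : Type 1 := O κ → Bool

/-- The basic open set `[ζ]` determined by the restriction of `ζ` to the ordinals below `β`. -/
def basicOpen (κ : Cardinal.{0}) (β : Ordinal) (ζ : O κ → Bool) : Set (Point κ) :=
  {η | ∀ γ : O κ, (γ : Ordinal) < β → η γ = ζ γ}

/-- The collection of basic open subsets of `2^κ`. -/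
def basicOpens (κ : Cardinal.{0}) : Set (Set (Point κ)) :=
  {s | ∃ β < κ.ord, ∃ ζ, s = basicOpen κ β ζ}

/-- The bounded topology on `2^κ`, generated by the basic open sets. -/
def boundedTopology (κ : Cardinal.{0}) : TopologicalSpace (Point κ) :=
  TopologicalSpace.generateFrom (basicOpens κ)

/-- `C` is a club (closed and unbounded) subset of `κ`. -/
def IsClub (κ : Cardinal.{0}) (C : Set Ordinal) : Prop :=
  C ⊆ Set.Iio κ.ord ∧
  (∀ α < κ.ord, ∃ β ∈ C, α ≤ β) ∧
  (∀ α, α ≠ 0 → α < κ.ord → (∀ β < α, ∃ γ ∈ C, β < γ ∧ γ < α) → α ∈ C)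

/-- `S` is a stationary subset of `κ`: it meets every club. -/
def IsStationary (κ : Cardinal.{0}) (S : Set Ordinal) : Prop :=
  ∀ C, IsClub κ C → (S ∩ C).Nonempty

/-- The diamond principle `◇_κ(X)`: there is a sequence `(S_α)_{α ∈ X}` with `S_α ⊆ α`
such that for every `A ⊆ κ` the set `{α ∈ X | A ∩ α = S_α}` is stationary. -/
def Diamond (κ : Cardinal.{0}) (X : Set Ordinal) : Prop :=
  ∃ S : Ordinal → Set Ordinal,
    (∀ α ∈ X, S α ⊆ Set.Iio α) ∧
    ∀ A ⊆ Set.Iio κ.ord, IsStationary κ {α | α ∈ X ∧ A ∩ Set.Iio α = S α}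

/-- The equivalence relation `E_X` modulo the non-stationary ideal:
`(η, ξ) ∈ E_X` iff `(η⁻¹{1} Δ ξ⁻¹{1}) ∩ X` is not stationary. -/
def EX (κ : Cardinal.{0}) (X : Set Ordinal) (η ξ : Point κ) : Prop :=
  ¬ IsStationary κ ((Subtype.val '' (symmDiff (η ⁻¹' {true}) (ξ ⁻¹' {true}))) ∩ X)

variable {L : FirstOrder.Language}

/-- `p` is a partial isomorphism between the (relational) structures `A` and `B`:
a partial injective function preserving all relations in both directions. -/
def IsPartialIso (κ : Cardinal.{0}) (A B : L.Structure (O κ)) (p : Set (O κ × O κ)) : Prop :=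
  (∀ x y y', (x, y) ∈ p → (x, y') ∈ p → y = y') ∧
  (∀ x x' y, (x, y) ∈ p → (x', y) ∈ p → x = x') ∧
  ∀ (n : ℕ) (R : L.Relations n) (a b : Fin n → O κ),
    (∀ i, (a i, b i) ∈ p) →
      (@FirstOrder.Language.Structure.RelMap L (O κ) A n R a ↔
        @FirstOrder.Language.Structure.RelMap L (O κ) B n R b)

/-- A legal move of player I in `EF^α_ω`: a subset of `α` of size `< κ`
extending the previous move. -/
def LegalI (κ : Cardinal.{0}) (α : Ordinal) (prev now : Set (O κ)) : Prop :=
  (∀ x ∈ now, (x : Ordinal) < α) ∧ Cardinal.mk ↥now < Cardinal.lift.{1} κ ∧ prev ⊆ now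

/-- A legal move of player II in `EF^α_ω` responding to the move `X` of player I:
a partial function `⊆ α × α` of size `< κ` extending the previous move, whose domain and
range contain `X`. -/
def LegalII (κ : Cardinal.{0}) (α : Ordinal) (X : Set (O κ))
    (prev now : Set (O κ × O κ)) : Prop :=
  (∀ q ∈ now, (q.1 : Ordinal) < α ∧ (q.2 : Ordinal) < α) ∧
  Cardinal.mk ↥now < Cardinal.lift.{1} κ ∧
  prev ⊆ now ∧
  (∀ x y y', (x, y) ∈ now → (x, y') ∈ now → y = y') ∧
  ∀ x ∈ X, (∃ y, (x, y) ∈ now) ∧ (∃ y, (y, x) ∈ now)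

/-- Player II has a winning strategy in the game `EF^α_ω (A↾α, B↾α)`:
a strategy `σ` (a function of the sequence of moves of player I so far) such that in
every play in which player I moves legally, all of II's moves are legal and the union
of II's moves is a partial isomorphism. -/
def IIWinsEF (κ : Cardinal.{0}) (α : Ordinal) (A B : L.Structure (O κ)) : Prop :=
  ∃ σ : List (Set (O κ)) → Set (O κ × O κ),
    ∀ x : ℕ → Set (O κ),
      (∀ n, LegalI κ α (if n = 0 then ∅ else x (n - 1)) (x n)) →
      (∀ n, LegalII κ α (x n)
          (if n = 0 then ∅ else σ ((List.range n).map x))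
          (σ ((List.range (n + 1)).map x))) ∧
      IsPartialIso κ A B (⋃ n, σ ((List.range (n + 1)).map x))

/-- Player I has a winning strategy in the game `EF^α_ω (A↾α, B↾α)`:
a strategy `τ` (a function of the sequence of moves of player II so far) whose moves are
legal as long as player II has moved legally, and such that in every play in which
player II moves legally the union of II's moves is not a partial isomorphism. -/
def IWinsEF (κ : Cardinal.{0}) (α : Ordinal) (A B : L.Structure (O κ)) : Prop :=
  ∃ τ : List (Set (O κ × O κ)) → Set (O κ),
    (∀ (y : ℕ → Set (O κ × O κ)) (n : ℕ),
      (∀ m < n, LegalII κ α (τ ((List.range m).map y))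
          (if m = 0 then ∅ else y (m - 1)) (y m)) →
      LegalI κ α (if n = 0 then ∅ else τ ((List.range (n - 1)).map y))
        (τ ((List.range n).map y))) ∧
    ∀ y : ℕ → Set (O κ × O κ),
      (∀ n, LegalII κ α (τ ((List.range n).map y))
          (if n = 0 then ∅ else y (n - 1)) (y n)) →
      ¬ IsPartialIso κ A B (⋃ n, y n)

/-- The structure `𝒜_η` with domain `κ` coded by `η ∈ 2^κ` via the bijection
`π : κ^{<ω} → κ`: the tuple `(a₁, …, a_n)` satisfies the `m`-th relation symbol iff
`η(π(m, a₁, …, a_n)) = 1`. -/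
def codedStructure (κ : Cardinal.{0}) (hκ : ℵ₀ ≤ κ) (L : FirstOrder.Language)
    [L.IsRelational] [∀ n, Encodable (L.Relations n)]
    (π : List (O κ) ≃ O κ) (η : Point κ) : L.Structure (O κ) where
  funMap {n} f _ := isEmptyElim f
  RelMap {n} R a :=
    η (π (⟨((Encodable.encode R : ℕ) : Ordinal), by
        simp only [Set.mem_Iio, Cardinal.lt_ord, Ordinal.card_nat]
        exact lt_of_lt_of_le (Cardinal.nat_lt_aleph0 _) hκ⟩ :: List.ofFn a)) = true

/-- The isomorphism relation `≅^κ_T` on `2^κ`: `η` and `ξ` are related iff either both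
coded structures are models of `T` and they are isomorphic, or neither is a model of `T`. -/
def isoRel (κ : Cardinal.{0}) (hκ : ℵ₀ ≤ κ) (L : FirstOrder.Language)
    [L.IsRelational] [∀ n, Encodable (L.Relations n)]
    (π : List (O κ) ≃ O κ) (T : L.Theory) (η ξ : Point κ) : Prop :=
  (@FirstOrder.Language.Theory.Model L (O κ) (codedStructure κ hκ L π η) T ∧
    @FirstOrder.Language.Theory.Model L (O κ) (codedStructure κ hκ L π ξ) T ∧
    Nonempty (@FirstOrder.Language.Equiv L (O κ) (O κ)
      (codedStructure κ hκ L π η) (codedStructure κ hκ L π ξ))) ∨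
  (¬ @FirstOrder.Language.Theory.Model L (O κ) (codedStructure κ hκ L π η) T ∧
    ¬ @FirstOrder.Language.Theory.Model L (O κ) (codedStructure κ hκ L π ξ) T)

/-! ### Regularity of `κ` and boundedness of small sets -/

variable {κ : Cardinal.{0}}

lemma isRegular_of_powerlt (hκ₁ : ℵ₀ < κ) (hκ₂ : κ ^< κ = κ) : κ.IsRegular := by
  refine ⟨hκ₁.le, not_lt.1 fun h => ?_⟩
  have h1 := Cardinal.lt_power_cof_ord hκ₁.le
  have h2 := Cardinal.le_powerlt κ h
  rw [hκ₂] at h2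
  exact absurd h1 h2.not_gt

lemma exists_gt' (hκ : ℵ₀ < κ) (x : O κ) : ∃ y : O κ, x < y :=
  ⟨⟨Order.succ x.1, (Cardinal.isSuccLimit_ord hκ.le).succ_lt x.2⟩, Order.lt_succ x.1⟩

/-- A subset of a regular cardinal `κ` of size `< κ` is bounded. -/
lemma small_bdd (hκ : ℵ₀ < κ) (hreg : κ.IsRegular) (Z : Set (O κ))
    (hZ : #Z < Cardinal.lift.{1} κ) : ∃ b : O κ, ∀ x ∈ Z, x < b := by
  obtain ⟨c, hc, hcZ⟩ := Cardinal.lt_lift_iff.1 hZ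
  -- Reindexing by a type in universe `0` makes the supremum of `Z` an ordinal of universe `0`.
  have he : Cardinal.lift.{1} #(c.out) = #Z := by rw [Cardinal.mk_out, hcZ]
  rw [← Cardinal.lift_id'.{0, 1} #Z] at he
  obtain ⟨e⟩ := Cardinal.lift_mk_eq'.1 he
  have hlt : (⨆ i : c.out, ((e i).1 : Ordinal)) < κ.ord := by
    refine Ordinal.iSup_lt_of_lt_cof ?_ fun i => (e i).1.2
    rwa [hreg.cof_ord, Cardinal.mk_out]
  obtain ⟨b, hb⟩ := exists_gt' hκ ⟨_, hlt⟩
  refine ⟨b, fun x hx => lt_of_le_of_lt ?_ hb⟩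
  have := Ordinal.le_iSup (fun i : c.out => ((e i).1 : Ordinal)) (e.symm ⟨x, hx⟩)
  rw [Equiv.apply_symm_apply] at this
  exact this

lemma mk_below_lt (b : O κ) : #{x : O κ // x < b} < Cardinal.lift.{1} κ := by
  have h1 : #{x : O κ // x < b} ≤ #(Set.Iio (b : Ordinal)) :=
    Cardinal.mk_le_of_injective (f := fun x => ⟨x.1.1, x.2⟩) fun x y h => by
      simpa [Subtype.ext_iff] using h
  refine h1.trans_lt ?_
  rw [Cardinal.mk_Iio_ordinal, Cardinal.lift_lt]
  exact Cardinal.lt_ord.1 b.2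

lemma aleph0_lt_lift (hκ : ℵ₀ < κ) : ℵ₀ < Cardinal.lift.{1} κ := by
  rw [← Cardinal.lift_aleph0.{1, 0}, Cardinal.lift_lt]; exact hκ

lemma range_bdd (hκ : ℵ₀ < κ) (hreg : κ.IsRegular) {ι : Type*} [Countable ι] (F : ι → O κ) :
    ∃ b : O κ, ∀ i, F i < b := by
  obtain ⟨b, hb⟩ := small_bdd hκ hreg (Set.range F)
    ((Cardinal.mk_le_aleph0_iff.2 (Set.countable_range F).to_subtype).trans_lt
      (aleph0_lt_lift hκ))
  exact ⟨b, fun i => hb _ ⟨i, rfl⟩⟩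

/-- There are fewer than `κ` finite sequences below any ordinal `β < κ`, so a function on
finite sequences is bounded on them. -/
lemma lists_bdd (hκ : ℵ₀ < κ) (hreg : κ.IsRegular) (F : List (O κ) → O κ) (β : O κ) :
    ∃ b : O κ, ∀ l : List (O κ), (∀ x ∈ l, x < β) → F l < b := by
  obtain ⟨b, hb⟩ := small_bdd hκ hreg
    (Set.range fun l : List {x : O κ // x < β} => F (l.map Subtype.val)) (by
      refine Cardinal.mk_range_le.trans_lt ((Cardinal.mk_list_le_max _).trans_lt ?_)
      exact max_lt (aleph0_lt_lift hκ) (mk_below_lt β))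
  refine ⟨b, fun l hl => hb _ ⟨l.attach.map fun x => ⟨x.1, hl _ x.2⟩, ?_⟩⟩
  simp only [List.map_map, Function.comp_def, List.attach_map_subtype_val]

/-! ### Clubs of closure points -/

/-- `α` is closed under the finitary function `F` on `κ`. -/
def ClosedUnder (F : List (O κ) → O κ) (α : Ordinal) : Prop :=
  ∀ l : List (O κ), (∀ x ∈ l, (x : Ordinal) < α) → (F l : Ordinal) < α

/-- `P` holds on a club, in a form convenient for intersecting clubs: it holds at every
`α < κ` closed under some finitary function on `κ`. -/
def ClubEv (κ : Cardinal.{0}) (P : Ordinal → Prop) : Prop :=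
  ∃ F : List (O κ) → O κ, ∀ α < κ.ord, ClosedUnder F α → P α

lemma isClub_closedUnder (hκ : ℵ₀ < κ) (hreg : κ.IsRegular) (F : List (O κ) → O κ) :
    IsClub κ {α | α < κ.ord ∧ ClosedUnder F α} := by
  refine ⟨fun α h => h.1, fun α hα => ?_, fun α h0 hα hlim => ⟨hα, fun l hl => ?_⟩⟩
  · have hstep : ∀ x : O κ, ∃ y : O κ, x < y ∧ ∀ l : List (O κ), (∀ z ∈ l, z < x) → F l < y := by
      intro x
      obtain ⟨y, hy⟩ := exists_gt' hκ x
      obtain ⟨b, hb⟩ := lists_bdd hκ hreg F x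
      exact ⟨max y b, lt_max_of_lt_left hy, fun l hl => lt_max_of_lt_right (hb l hl)⟩
    choose g hg1 hg2 using hstep
    let s : ℕ → O κ := fun n => g^[n] ⟨α, hα⟩
    have hs : ∀ n, s (n + 1) = g (s n) := fun n => Function.iterate_succ_apply' g n _
    have hmono : StrictMono s := strictMono_nat_of_lt_succ fun n => by rw [hs]; exact hg1 _
    obtain ⟨b, hb⟩ := range_bdd hκ hreg s
    -- The least upper bound of the iterates is closed under `F`.
    obtain ⟨m, hm, hmin⟩ := WellFounded.has_min (wellFounded_lt (α := O κ))
      {b | ∀ n, s n < b} ⟨b, hb⟩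
    have hlt : ∀ x : O κ, x < m → ∃ n, x < s n := by
      intro x hx
      by_contra! hcon
      refine hmin x (fun n => ?_) hx
      exact (hmono (Nat.lt_succ_self n)).trans_le (hcon (n + 1))
    refine ⟨m, ⟨m.2, fun l hl => ?_⟩, (hm 0).le⟩
    have : ∃ n, ∀ x ∈ l, x < s n := by
      induction l with
      | nil => exact ⟨0, by simp⟩
      | cons a l ih =>
        obtain ⟨n, hn⟩ := ih fun x hx => hl x (List.mem_cons_of_mem _ hx)
        obtain ⟨k, hk⟩ := hlt a (hl a List.mem_cons_self)
        refine ⟨max n k, fun x hx => ?_⟩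
        rcases List.mem_cons.1 hx with rfl | hx
        · exact hk.trans_le (hmono.monotone (le_max_right _ _))
        · exact (hn x hx).trans_le (hmono.monotone (le_max_left _ _))
    obtain ⟨n, hn⟩ := this
    have h1 := hg2 (s n) l hn
    rw [← hs] at h1
    exact h1.trans (hm _)
  · have : ∃ γ, (γ < κ.ord ∧ ClosedUnder F γ) ∧ γ < α ∧ ∀ x ∈ l, (x : Ordinal) < γ := by
      induction l with
      | nil =>
        obtain ⟨γ, hγ, _, h⟩ := hlim 0 (pos_iff_ne_zero.2 h0)
        exact ⟨γ, hγ, h, by simp⟩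
      | cons a l ih =>
        obtain ⟨γ, _, h, h'⟩ := ih fun x hx => hl x (List.mem_cons_of_mem _ hx)
        obtain ⟨δ, hδ, h1, h2⟩ := hlim (max γ a) (max_lt h (hl a List.mem_cons_self))
        refine ⟨δ, hδ, h2, fun x hx => ?_⟩
        rcases List.mem_cons.1 hx with rfl | hx
        · exact (le_max_right _ _).trans_lt h1
        · exact (h' x hx).trans ((le_max_left _ _).trans_lt h1)
    obtain ⟨γ, hγ, h, h'⟩ := this
    exact (hγ.2 l h').trans h

lemma ClubEv.mono {P Q : Ordinal → Prop} (hP : ClubEv κ P) (h : ∀ α < κ.ord, P α → Q α) :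
    ClubEv κ Q := by
  obtain ⟨F, hF⟩ := hP
  exact ⟨F, fun α hα hc => h α hα (hF α hα hc)⟩

lemma ClubEv.and {P Q : Ordinal → Prop} (hP : ClubEv κ P) (hQ : ClubEv κ Q) :
    ClubEv κ fun α => P α ∧ Q α := by
  obtain ⟨F, hF⟩ := hP
  obtain ⟨G, hG⟩ := hQ
  refine ⟨fun l => max (F l) (G l), fun α hα hc => ⟨hF α hα fun l hl => ?_,
    hG α hα fun l hl => ?_⟩⟩
  · exact lt_of_le_of_lt (Subtype.coe_le_coe.2 (le_max_left _ _)) (hc l hl)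
  · exact lt_of_le_of_lt (Subtype.coe_le_coe.2 (le_max_right _ _)) (hc l hl)

lemma ClubEv.forall (hκ : ℵ₀ < κ) (hreg : κ.IsRegular) {ι : Type*} [Countable ι]
    {P : ι → Ordinal → Prop} (hP : ∀ i, ClubEv κ (P i)) : ClubEv κ fun α => ∀ i, P i α := by
  choose F hF using hP
  choose G hG using fun l => range_bdd hκ hreg fun i => F i l
  refine ⟨G, fun α hα hc i => hF i α hα fun l hl => ?_⟩
  exact lt_trans (Subtype.coe_lt_coe.2 (hG l i)) (hc l hl)

lemma ClubEv.closed (F : List (O κ) → O κ) : ClubEv κ (ClosedUnder F) :=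
  ⟨F, fun _ _ h => h⟩

lemma ClubEv.closed₁ [Nonempty (O κ)] (F : O κ → O κ) :
    ClubEv κ fun α => ∀ x : O κ, (x : Ordinal) < α → (F x : Ordinal) < α :=
  (ClubEv.closed fun l => F (l.headD (Classical.arbitrary _))).mono fun _ _ h x hx => by
    simpa using h [x] (by simpa using hx)

lemma ClubEv.closed₂ [Nonempty (O κ)] (F : O κ → O κ → O κ) :
    ClubEv κ fun α => ∀ x y : O κ, (x : Ordinal) < α → (y : Ordinal) < α →
      (F x y : Ordinal) < α :=
  (ClubEv.closed fun l => F (l.headD (Classical.arbitrary _))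
    (l.tail.headD (Classical.arbitrary _))).mono fun _ _ h x y hx hy => by
      simpa using h [x, y] (by simpa using ⟨hx, hy⟩)

lemma ClubEv.of_isClub (hκ : ℵ₀ < κ) {C : Set Ordinal} (hC : IsClub κ C) :
    ClubEv κ fun α => α ∈ C := by
  have h : ∀ x : O κ, ∃ y : O κ, y.1 ∈ C ∧ x < y := by
    intro x
    obtain ⟨y, hy⟩ := exists_gt' hκ x
    obtain ⟨β, hβ, hle⟩ := hC.2.1 y y.2
    exact ⟨⟨β, hC.1 hβ⟩, hβ, lt_of_lt_of_le (b := y) hy hle⟩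
  choose g hg1 hg2 using h
  have h0 : (0 : Ordinal) < κ.ord := by
    rw [Cardinal.lt_ord]; simpa using (Cardinal.aleph0_pos.trans hκ)
  refine ⟨fun l => g (l.headD ⟨0, h0⟩), fun α hα hc => hC.2.2 α ?_ hα fun β hβ => ?_⟩
  · have := hc [] (by simp)
    exact (pos_of_gt this).ne'
  · refine ⟨g ⟨β, hβ.trans hα⟩, hg1 _, hg2 _, ?_⟩
    simpa using hc [⟨β, hβ.trans hα⟩] (by simpa using hβ)

lemma ClubEv.exists_isClub (hκ : ℵ₀ < κ) (hreg : κ.IsRegular) {P : Ordinal → Prop}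
    (hP : ClubEv κ P) : ∃ C, IsClub κ C ∧ ∀ α ∈ C, P α := by
  obtain ⟨F, hF⟩ := hP
  exact ⟨_, isClub_closedUnder hκ hreg F, fun α h => hF α h.1 h.2⟩

/-! ### Enumerating the small subsets of `κ × κ` -/

lemma mk_O (κ : Cardinal.{0}) : #(O κ) = Cardinal.lift.{1} κ := by
  rw [Cardinal.mk_Iio_ordinal, Cardinal.card_ord]

/-- Since `κ^{<κ} = κ`, the subsets of `κ × κ` of size `< κ` can be enumerated by `κ`. -/
lemma exists_enum (hκ₁ : ℵ₀ < κ) (hκ₂ : κ ^< κ = κ) :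
    ∃ e : O κ → Set (O κ × O κ), (∀ γ, #(e γ) < Cardinal.lift.{1} κ) ∧
      ∀ Z : Set (O κ × O κ), #Z < Cardinal.lift.{1} κ → ∃ γ, e γ = Z := by
  have hinf : ℵ₀ ≤ Cardinal.lift.{1} κ := (aleph0_lt_lift hκ₁).le
  have hP : #(O κ × O κ) = Cardinal.lift.{1} κ := by
    rw [Cardinal.mk_prod, Cardinal.lift_id, mk_O, Cardinal.mul_eq_self hinf]
  have hcov : {Z : Set (O κ × O κ) | #Z < Cardinal.lift.{1} κ} ⊆
      ⋃ β : O κ, {Z : Set (O κ × O κ) | #Z ≤ Cardinal.lift.{1} (β : Ordinal).card} := by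
    intro Z hZ
    obtain ⟨c, hc, hcZ⟩ := Cardinal.lt_lift_iff.1 hZ
    refine Set.mem_iUnion.2 ⟨⟨c.ord, Cardinal.ord_lt_ord.2 hc⟩, ?_⟩
    simp [hcZ]
  have hle : #{Z : Set (O κ × O κ) | #Z < Cardinal.lift.{1} κ} ≤ #(O κ) := by
    refine (Cardinal.mk_le_mk_of_subset hcov).trans ((Cardinal.mk_iUnion_le _).trans ?_)
    rw [mk_O]
    refine (mul_le_mul_right (ciSup_le' fun β => ?_) _).trans (Cardinal.mul_eq_self hinf).le
    refine (Cardinal.mk_bounded_set_le _ _).trans ?_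
    rw [hP, max_eq_left hinf, ← Cardinal.lift_power, Cardinal.lift_le]
    exact (Cardinal.le_powerlt κ (Cardinal.lt_ord.1 β.2)).trans hκ₂.le
  obtain ⟨j⟩ := hle
  have : Nonempty {Z : Set (O κ × O κ) | #Z < Cardinal.lift.{1} κ} :=
    ⟨⟨∅, by simpa using (Cardinal.aleph0_pos.trans hκ₁)⟩⟩
  refine ⟨fun γ => (Function.invFun j γ).1, fun γ => (Function.invFun j γ).2, fun Z hZ => ⟨j ⟨Z, hZ⟩, ?_⟩⟩
  exact congrArg Subtype.val (Function.leftInverse_invFun j.injective ⟨Z, hZ⟩)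

/-! ### Restrictions of structures and elementarity on a club -/

/-- The substructure `A↾α` of the relational structure `A`. -/
@[reducible]
def restr [L.IsRelational] (A : L.Structure (O κ)) (α : Ordinal) :
    L.Structure {x : O κ // (x : Ordinal) < α} where
  funMap f _ := isEmptyElim f
  RelMap R a := @Language.Structure.RelMap L (O κ) A _ R fun i => (a i).1

/-- `A↾α` is a model of `T`. -/
def RestrModel [L.IsRelational] (T : L.Theory) (A : L.Structure (O κ)) (α : Ordinal) : Prop :=
  @Language.Theory.Model L {x : O κ // (x : Ordinal) < α} (restr A α) T

/-- Since the vocabulary is countable, `A↾α` is an elementary substructure of `A` for a club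
of `α`, by the Tarski–Vaught test. -/
lemma clubEv_restrModel [L.IsRelational] [∀ n, Countable (L.Relations n)]
    (hκ : ℵ₀ < κ) (hreg : κ.IsRegular) [Nonempty (O κ)] (T : L.Theory)
    (A : L.Structure (O κ)) :
    ClubEv κ fun α => (RestrModel T A α ↔ @Language.Theory.Model L (O κ) A T) := by
  have hcount : Countable (Σ n, L.BoundedFormula Empty n) := by
    have : Countable L.Symbols := by unfold Language.Symbols; infer_instance
    infer_instance
  let d : O κ := Classical.arbitrary _
  -- A Skolem function for each formula, reading a list as the tuple of parameters.
  have hsk : ∀ (p : Σ n, L.BoundedFormula Empty n) (l : List (O κ)), ∃ b : O κ,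
      ∀ (m : ℕ) (hm : p.1 = m + 1) (a : O κ),
        (hm ▸ p.2).Realize default (Fin.snoc (fun i : Fin m => l.getD i d) a : _ → O κ) →
        (hm ▸ p.2).Realize default (Fin.snoc (fun i : Fin m => l.getD i d) b : _ → O κ) := by
    rintro ⟨n, φ⟩ l
    rcases n with _ | m
    · exact ⟨d, fun m hm => by simp at hm⟩
    · by_cases h : ∃ a : O κ,
          φ.Realize default (Fin.snoc (fun i : Fin m => l.getD i d) a : _ → O κ)
      · obtain ⟨a, ha⟩ := h
        refine ⟨a, fun m' hm => ?_⟩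
        obtain rfl : m = m' := by simpa using hm
        exact fun _ _ => ha
      · refine ⟨d, fun m' hm a ha => ?_⟩
        obtain rfl : m = m' := by simpa using hm
        exact absurd ⟨a, ha⟩ h
  choose G hG using hsk
  refine (ClubEv.forall hκ hreg fun p => ClubEv.closed (G p)).mono fun α hα hcl => ?_
  let _ := A
  let _ := restr A α
  let f : {x : O κ // (x : Ordinal) < α} ↪[L] O κ :=
    { toFun := Subtype.val
      inj' := Subtype.val_injective
      map_fun' := fun f => isEmptyElim f
      map_rel' := fun _ _ => Iff.rfl }
  refine (f.toElementaryEmbedding fun n φ x a ha => ?_).theory_model_iff T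
  have hx : (fun i : Fin n => (List.ofFn (f ∘ x)).getD i d) = f ∘ x := by
    funext i
    simp [List.getD_eq_getElem?_getD]
  have := hG ⟨n + 1, φ⟩ (List.ofFn (f ∘ x)) n rfl a
  rw [hx] at this
  refine ⟨⟨G ⟨n + 1, φ⟩ (List.ofFn (f ∘ x)), hcl _ _ fun y hy => ?_⟩, this ha⟩
  obtain ⟨i, rfl⟩ := (List.mem_ofFn' _ _).1 hy
  exact (x i).2

/-! ### Amenable isomorphisms between restrictions -/

/-- A permutation `h` of `κ` is amenable at `α` (relative to the enumeration `e` of small sets)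
if it preserves `α` and if composing with `h` or `h⁻¹` maps the family `{e γ | γ < α}` into
itself. -/
def Amen (e : O κ → Set (O κ × O κ)) (α : Ordinal) (h : Equiv.Perm (O κ)) : Prop :=
  (∀ x, (h x : Ordinal) < α ↔ (x : Ordinal) < α) ∧
  (∀ γ : O κ, (γ : Ordinal) < α → ∃ δ : O κ, (δ : Ordinal) < α ∧ e δ = Prod.map id h '' e γ) ∧
  (∀ γ : O κ, (γ : Ordinal) < α →
    ∃ δ : O κ, (δ : Ordinal) < α ∧ e δ = Prod.map id h.symm '' e γ)

lemma Amen.refl (e : O κ → Set (O κ × O κ)) (α : Ordinal) : Amen e α (Equiv.refl _) :=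
  ⟨fun _ => Iff.rfl, fun γ hγ => ⟨γ, hγ, by simp⟩, fun γ hγ => ⟨γ, hγ, by simp⟩⟩

lemma Amen.symm {e : O κ → Set (O κ × O κ)} {α : Ordinal} {h : Equiv.Perm (O κ)}
    (H : Amen e α h) : Amen e α h.symm :=
  ⟨fun x => by rw [← H.1, Equiv.apply_symm_apply], H.2.2, H.2.1⟩

lemma Amen.trans {e : O κ → Set (O κ × O κ)} {α : Ordinal} {h k : Equiv.Perm (O κ)}
    (H : Amen e α h) (K : Amen e α k) : Amen e α (h.trans k) := by
  refine ⟨fun x => by rw [Equiv.trans_apply, K.1, H.1], fun γ hγ => ?_, fun γ hγ => ?_⟩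
  · obtain ⟨δ, hδ, h1⟩ := H.2.1 γ hγ
    obtain ⟨ε, hε, h2⟩ := K.2.1 δ hδ
    refine ⟨ε, hε, ?_⟩
    rw [h2, h1, Set.image_image]
    rfl
  · obtain ⟨δ, hδ, h1⟩ := K.2.2 γ hγ
    obtain ⟨ε, hε, h2⟩ := H.2.2 δ hδ
    refine ⟨ε, hε, ?_⟩
    rw [h2, h1, Set.image_image]
    rfl

/-- `h` preserves all relations between tuples below `α`. -/
def RelIso (α : Ordinal) (A B : L.Structure (O κ)) (h : Equiv.Perm (O κ)) : Prop :=
  ∀ (n : ℕ) (R : L.Relations n) (a : Fin n → O κ), (∀ i, (a i : Ordinal) < α) →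
    (@Language.Structure.RelMap L (O κ) A n R a ↔
      @Language.Structure.RelMap L (O κ) B n R (fun i => h (a i)))

/-- Some amenable permutation is an isomorphism from `A↾α` onto `B↾α`. -/
def AmenIso (e : O κ → Set (O κ × O κ)) (α : Ordinal) (A B : L.Structure (O κ)) : Prop :=
  ∃ h, Amen e α h ∧ RelIso α A B h

lemma AmenIso.symm {e : O κ → Set (O κ × O κ)} {α : Ordinal} {A B : L.Structure (O κ)}
    (H : AmenIso e α A B) : AmenIso e α B A := by
  obtain ⟨h, h1, h2⟩ := H
  refine ⟨h.symm, h1.symm, fun n R a ha => ?_⟩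
  rw [h2 n R _ fun i => (h1.symm.1 _).2 (ha i)]
  simp

lemma AmenIso.trans {e : O κ → Set (O κ × O κ)} {α : Ordinal} {A B C : L.Structure (O κ)}
    (H : AmenIso e α A B) (K : AmenIso e α B C) : AmenIso e α A C := by
  obtain ⟨h, h1, h2⟩ := H
  obtain ⟨k, k1, k2⟩ := K
  refine ⟨h.trans k, h1.trans k1, fun n R a ha => ?_⟩
  rw [h2 n R a ha, k2 n R _ fun i => (h1.1 _).2 (ha i)]
  rfl

lemma mk_image_lt {Z : Set (O κ × O κ)} (hZ : #Z < Cardinal.lift.{1} κ)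
    (f : O κ × O κ → O κ × O κ) : #(f '' Z) < Cardinal.lift.{1} κ :=
  Cardinal.mk_image_le.trans_lt hZ

/-- A global isomorphism restricts to an amenable isomorphism at a club of ordinals. -/
lemma clubEv_amenIso [Nonempty (O κ)] {e : O κ → Set (O κ × O κ)}
    (hsm : ∀ γ, #(e γ) < Cardinal.lift.{1} κ)
    (he : ∀ Z : Set (O κ × O κ), #Z < Cardinal.lift.{1} κ → ∃ γ, e γ = Z)
    {A B : L.Structure (O κ)} (H : Nonempty (@Language.Equiv L (O κ) (O κ) A B)) :
    ClubEv κ fun α => AmenIso e α A B := by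
  obtain ⟨h⟩ := H
  obtain ⟨k, hrel⟩ : ∃ k : Equiv.Perm (O κ), ∀ (n : ℕ) (R : L.Relations n) (a : Fin n → O κ),
      @Language.Structure.RelMap L (O κ) B n R (fun i => k (a i)) ↔
        @Language.Structure.RelMap L (O κ) A n R a :=
    ⟨@Language.Equiv.toEquiv L _ _ A B h, fun n => @Language.Equiv.map_rel' L _ _ A B h n⟩
  choose c hc using he
  refine ((ClubEv.closed₁ fun x => k x).and ((ClubEv.closed₁ fun x => k.symm x).and
    ((ClubEv.closed₁ fun γ => c _ (mk_image_lt (hsm γ) (Prod.map id k))).and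
      (ClubEv.closed₁ fun γ => c _ (mk_image_lt (hsm γ) (Prod.map id k.symm)))))).mono
    fun α hα ⟨h1, h2, h3, h4⟩ => ⟨k, ⟨fun x => ⟨fun hx => ?_, h1 x⟩, fun γ hγ => ⟨_, h3 γ hγ, hc _ _⟩,
      fun γ hγ => ⟨_, h4 γ hγ, hc _ _⟩⟩, fun n R a _ => (hrel n R a).symm⟩
  simpa using h2 _ hx

/-- If player I wins the Ehrenfeucht–Fraïssé game on `κ`, then at a club of `α` no isomorphism
from `A↾α` to `B↾α` is amenable. Otherwise player II could beat the strategy `τ` by answering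
each `X_n` with the restriction of the isomorphism `h` to `X_n ∪ h⁻¹[X_n]`: amenability keeps the
play inside `{e γ | γ < α}`, and the closure of `α` under `τ` keeps `X_n` below `α`. -/
lemma clubEv_not_amenIso (hκ : ℵ₀ < κ) (hreg : κ.IsRegular)
    [Nonempty (O κ)] {e : O κ → Set (O κ × O κ)}
    (hsm : ∀ γ, #(e γ) < Cardinal.lift.{1} κ)
    (he : ∀ Z : Set (O κ × O κ), #Z < Cardinal.lift.{1} κ → ∃ γ, e γ = Z)
    {A B : L.Structure (O κ)} (H : IWinsEF κ κ.ord A B) :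
    ClubEv κ fun α => ¬ AmenIso e α A B := by
  obtain ⟨τ, hτ, hwin⟩ := H
  have hinf := aleph0_lt_lift hκ
  choose c hc using he
  -- The diagonal codes a subset of `κ` as an element of the enumerated family.
  have hdiag : ∀ Z : Set (O κ), #Z < Cardinal.lift.{1} κ →
      #((fun x => (x, x)) '' Z : Set (O κ × O κ)) < Cardinal.lift.{1} κ :=
    fun Z hZ => Cardinal.mk_image_le.trans_lt hZ
  have hun : ∀ γ δ, #(e γ ∪ Prod.swap '' e δ : Set (O κ × O κ)) < Cardinal.lift.{1} κ :=
    fun γ δ => (Cardinal.mk_union_le _ _).trans_lt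
      (Cardinal.add_lt_of_lt hinf.le (hsm γ) (mk_image_lt (hsm δ) _))
  choose bd hbd using small_bdd hκ hreg
  classical
  let d : O κ := Classical.arbitrary _
  let F : List (O κ) → O κ := fun l =>
    if h : #(τ (l.map e)) < Cardinal.lift.{1} κ then c _ (hdiag _ h) else d
  let F' : List (O κ) → O κ := fun l =>
    if h : #(τ (l.map e)) < Cardinal.lift.{1} κ then bd _ h else d
  refine ((ClubEv.closed F).and ((ClubEv.closed F').and
    (ClubEv.closed₂ fun γ δ => c _ (hun γ δ)))).mono ?_
  rintro α hα ⟨hF, hF', hU⟩ ⟨h, hAm, hRel⟩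
  let resp : Set (O κ) → Set (O κ × O κ) := fun Z => {p | p.2 = h p.1 ∧ (p.1 ∈ Z ∨ p.2 ∈ Z)}
  let ys : ℕ → List (Set (O κ × O κ)) := fun n =>
    Nat.rec [] (fun _ l => l ++ [resp (τ l)]) n
  let y : ℕ → Set (O κ × O κ) := fun n => resp (τ (ys n))
  have hys : ∀ n, (List.range n).map y = ys n := by
    intro n
    induction n with
    | zero => rfl
    | succ n ih => rw [List.range_succ, List.map_append, ih]; rfl
  have key : ∀ n, (∃ l : List (O κ), (∀ x ∈ l, (x : Ordinal) < α) ∧ ys n = l.map e) ∧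
      ∀ m < n, LegalII κ κ.ord (τ (ys m)) (if m = 0 then ∅ else y (m - 1)) (y m) := by
    intro n
    induction n with
    | zero => exact ⟨⟨[], by simp, rfl⟩, by simp⟩
    | succ n ih =>
      obtain ⟨⟨l, hl, hln⟩, ih⟩ := ih
      have hI := hτ y n (by simpa only [hys] using ih)
      simp only [hys] at hI
      obtain ⟨-, hIsm, hIsub⟩ := hI
      have hsm' : #(τ (l.map e)) < Cardinal.lift.{1} κ := by rwa [← hln]
      have h1 := hF l hl
      simp only [F, dif_pos hsm'] at h1
      obtain ⟨γ, hγ, hγe⟩ := hAm.2.1 _ h1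
      obtain ⟨δ, hδ, hδe⟩ := hAm.2.2 _ h1
      have hyn : e (c _ (hun γ δ)) = y n := by
        rw [hc, hγe, hδe, hc, ← hln]
        ext ⟨p, q⟩
        simp only [y, resp, Set.mem_union, Set.mem_image, Prod.exists, Prod.map, id,
          Prod.swap, Prod.mk.injEq, Set.mem_setOf_eq]
        constructor
        · rintro (⟨_, _, ⟨x, hx, rfl, rfl⟩, rfl, rfl⟩ | ⟨_, _, ⟨_, _, ⟨x, hx, rfl, rfl⟩, rfl, rfl⟩, rfl, rfl⟩)
          · exact ⟨rfl, Or.inl hx⟩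
          · exact ⟨by simp, Or.inr hx⟩
        · rintro ⟨rfl, hx | hx⟩
          · exact Or.inl ⟨p, p, ⟨p, hx, rfl, rfl⟩, rfl, rfl⟩
          · exact Or.inr ⟨h p, p, ⟨h p, h p, ⟨h p, hx, rfl, rfl⟩, rfl, by simp⟩, rfl, rfl⟩
      refine ⟨⟨l ++ [c _ (hun γ δ)], ?_, ?_⟩, fun m hm => ?_⟩
      · intro x hx
        rcases List.mem_append.1 hx with hx | hx
        · exact hl x hx
        · rw [List.mem_singleton.1 hx]
          exact hU γ δ hγ hδ
      · rw [List.map_append, ← hln, List.map_singleton, hyn]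
      rcases Nat.lt_succ_iff_lt_or_eq.1 hm with hm | rfl
      · exact ih m hm
      refine ⟨fun q _ => ⟨q.1.2, q.2.2⟩, by rw [← hyn]; exact hsm _, ?_, ?_, ?_⟩
      · split_ifs with h0
        · exact Set.empty_subset _
        · rw [if_neg h0] at hIsub
          rintro p ⟨hp, hp'⟩
          exact ⟨hp, hp'.imp (fun h => hIsub h) (fun h => hIsub h)⟩
      · rintro x y y' ⟨h1, -⟩ ⟨h2, -⟩
        exact h1.trans h2.symm
      · intro x hx
        exact ⟨⟨h x, rfl, Or.inl hx⟩, ⟨h.symm x, by simp, Or.inr hx⟩⟩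
  have hbelow : ∀ n, ∀ x ∈ τ (ys n), (x : Ordinal) < α := by
    intro n x hx
    obtain ⟨⟨l, hl, hln⟩, hleg⟩ := key n
    have hI := (hτ y n (by simpa only [hys] using hleg)).2.1
    simp only [hys] at hI
    rw [hln] at hI hx
    have h1 := hF' l hl
    simp only [F', dif_pos hI] at h1
    exact lt_trans (Subtype.coe_lt_coe.2 (hbd _ hI x hx)) h1
  have hmem : ∀ p q, (p, q) ∈ (⋃ n, y n) → q = h p ∧ (p : Ordinal) < α := by
    intro p q hpq
    obtain ⟨n, hq, hp⟩ := Set.mem_iUnion.1 hpq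
    refine ⟨hq, hp.elim (hbelow n p) fun hp => ?_⟩
    have := hbelow n _ hp
    rw [show (p, q).2 = h p from hq] at this
    exact (hAm.1 p).1 this
  refine hwin y (fun n => by simpa only [hys] using (key (n + 1)).2 n (Nat.lt_succ_self n))
    ⟨fun x z z' h1 h2 => (hmem _ _ h1).1.trans (hmem _ _ h2).1.symm, fun x x' z h1 h2 => ?_,
      fun n R a b hab => ?_⟩
  · exact h.injective ((hmem _ _ h1).1.symm.trans (hmem _ _ h2).1)
  · rw [hRel n R a fun i => (hmem _ _ (hab i)).2]
    rw [show b = fun i => h (a i) from funext fun i => (hmem _ _ (hab i)).1]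

/-! ### The reduction -/

/-- The point of `2^κ` with support `S`. -/
def charPoint (κ : Cardinal.{0}) (S : Set Ordinal) : Point κ :=
  open Classical in fun γ => decide ((γ : Ordinal) ∈ S)

/-- The local condition defining the reduction at `α`: both `A↾α` and `B↾α` are models of `T`,
and they are isomorphic by an amenable map. -/
def LocalIso [L.IsRelational] (T : L.Theory) (e : O κ → Set (O κ × O κ)) (α : Ordinal)
    (A B : L.Structure (O κ)) : Prop :=
  RestrModel T A α ∧ RestrModel T B α ∧ AmenIso e α A B

/-- `A` and `B` have the same restriction to `α`. -/
def AgreeBelow (α : Ordinal) (A B : L.Structure (O κ)) : Prop :=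
  ∀ (n : ℕ) (R : L.Relations n) (a : Fin n → O κ), (∀ i, (a i : Ordinal) < α) →
    (@Language.Structure.RelMap L (O κ) A n R a ↔ @Language.Structure.RelMap L (O κ) B n R a)

lemma AgreeBelow.amenIso {α : Ordinal} {A B : L.Structure (O κ)} (H : AgreeBelow α A B)
    (e : O κ → Set (O κ × O κ)) : AmenIso e α A B :=
  ⟨Equiv.refl _, Amen.refl e α, H⟩

lemma AgreeBelow.restr_eq [L.IsRelational] {α : Ordinal} {A B : L.Structure (O κ)}
    (H : AgreeBelow α A B) : restr A α = restr B α := by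
  ext n R a
  · exact isEmptyElim R
  · exact H n R _ fun i => (a i).2

lemma AgreeBelow.restrModel [L.IsRelational] {α : Ordinal} {A B : L.Structure (O κ)}
    (H : AgreeBelow α A B) (T : L.Theory) : RestrModel T A α ↔ RestrModel T B α := by
  unfold RestrModel
  rw [H.restr_eq]

lemma AgreeBelow.localIso [L.IsRelational] {α : Ordinal} {A A' : L.Structure (O κ)}
    (H : AgreeBelow α A A') (T : L.Theory) (e : O κ → Set (O κ × O κ)) (B : L.Structure (O κ)) :
    LocalIso T e α A B ↔ LocalIso T e α A' B := by
  unfold LocalIso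
  rw [H.restrModel T]
  exact and_congr_right fun _ => and_congr_right fun _ =>
    ⟨(H.amenIso e).symm.trans, (H.amenIso e).trans⟩

/-- The reduction of `≅^κ_T` to `E_X`, for a sequence `S` guessing subsets of `κ`. -/
def reduction (hκ : ℵ₀ ≤ κ) [L.IsRelational] [∀ n, Encodable (L.Relations n)]
    (π : List (O κ) ≃ O κ) (T : L.Theory) (e : O κ → Set (O κ × O κ)) (S : Ordinal → Set Ordinal)
    (η : Point κ) : Point κ :=
  open Classical in fun α => decide (LocalIso T e α (codedStructure κ hκ L π η)
    (codedStructure κ hκ L π (charPoint κ (S α))))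

lemma natCast_lt_ord (hκ : ℵ₀ ≤ κ) (m : ℕ) : (m : Ordinal) < κ.ord := by
  rw [Cardinal.lt_ord, Ordinal.card_nat]
  exact Cardinal.natCast_lt_aleph0.trans_le hκ

/-- The `α`-th value of the reduction depends only on `η` restricted to the codes of atomic
formulas with parameters below `α`, and these are bounded in `κ`. -/
lemma continuous_reduction (hκ : ℵ₀ < κ) (hreg : κ.IsRegular) [L.IsRelational]
    [∀ n, Encodable (L.Relations n)] (π : List (O κ) ≃ O κ) (T : L.Theory)
    (e : O κ → Set (O κ × O κ)) (S : Ordinal → Set Ordinal) :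
    @Continuous _ _ (boundedTopology κ) (boundedTopology κ) (reduction hκ.le π T e S) := by
  let _ := boundedTopology κ
  refine continuous_generateFrom_iff.2 ?_
  rintro _ ⟨β, hβ, ζ, rfl⟩
  refine isOpen_iff_forall_mem_open.2 fun η hη => ?_
  obtain ⟨β', hβ'⟩ := range_bdd hκ hreg
    (fun m : ℕ => (⟨(m : Ordinal), natCast_lt_ord hκ.le m⟩ : O κ))
  obtain ⟨b, hb⟩ := lists_bdd hκ hreg π (max β' ⟨β, hβ⟩)
  refine ⟨basicOpen κ b η, fun ξ hξ γ hγ => ?_,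
    TopologicalSpace.isOpen_generateFrom_of_mem ⟨b, b.2, η, rfl⟩, fun _ _ => rfl⟩
  rw [← hη γ hγ]
  have hag : AgreeBelow (γ : Ordinal) (codedStructure κ hκ.le L π ξ)
      (codedStructure κ hκ.le L π η) := by
    intro n R a ha
    have : π (⟨((Encodable.encode R : ℕ) : Ordinal), natCast_lt_ord hκ.le _⟩ :: List.ofFn a) < b := by
      refine hb _ fun x hx => ?_
      rcases List.mem_cons.1 hx with rfl | hx
      · exact lt_max_of_lt_left (hβ' _)
      · obtain ⟨i, rfl⟩ := (List.mem_ofFn' _ _).1 hx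
        exact lt_max_of_lt_right (lt_trans (b := (γ : Ordinal)) (ha i) hγ)
    exact iff_of_eq (congrArg (· = true) (hξ _ this))
  unfold reduction
  rw [decide_eq_decide]
  exact hag.localIso T e _

/-- At a club of `α`, the structure coded by the restriction of `η` to `α` agrees with `𝒜_η`
below `α`. -/
lemma clubEv_agreeBelow (hκ : ℵ₀ < κ) (hreg : κ.IsRegular) [L.IsRelational]
    [∀ n, Encodable (L.Relations n)] (π : List (O κ) ≃ O κ) (η : Point κ) :
    ClubEv κ fun α => ∀ S : Set Ordinal, (Subtype.val '' (η ⁻¹' {true})) ∩ Set.Iio α = S →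
      AgreeBelow α (codedStructure κ hκ.le L π η) (codedStructure κ hκ.le L π (charPoint κ S)) := by
  refine (ClubEv.forall hκ hreg fun m : ℕ =>
    ClubEv.closed fun l => π (⟨(m : Ordinal), natCast_lt_ord hκ.le m⟩ :: l)).mono ?_
  rintro α hα hcl S rfl n R a ha
  have hlt := hcl (Encodable.encode R) (List.ofFn a) fun x hx => by
    obtain ⟨i, rfl⟩ := (List.mem_ofFn' _ _).1 hx
    exact ha i
  have hpt : ∀ γ : O κ, (γ : Ordinal) < α →
      (η γ = true ↔ charPoint κ ((Subtype.val '' (η ⁻¹' {true})) ∩ Set.Iio α) γ = true) := by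
    intro γ hγ
    have hγ' : (γ : Ordinal) < κ.ord := γ.2
    simp [charPoint, hγ, hγ']
  exact hpt _ hlt

lemma EX.symm' {X : Set Ordinal} {η ξ : Point κ} (h : EX κ X η ξ) : EX κ X ξ η := by
  unfold EX at *
  rwa [symmDiff_comm]

lemma EX.of_clubEv (hκ : ℵ₀ < κ) (hreg : κ.IsRegular) {X : Set Ordinal} {η ξ : Point κ}
    (h : ClubEv κ fun α => ∀ γ : O κ, (γ : Ordinal) = α → η γ = ξ γ) : EX κ X η ξ := by
  obtain ⟨C, hC, hP⟩ := h.exists_isClub hκ hreg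
  intro hst
  obtain ⟨_, ⟨⟨γ, hγ, rfl⟩, -⟩, hγC⟩ := hst C hC
  have := hP _ hγC γ rfl
  simp [Set.mem_symmDiff, this] at hγ

/-- If the guessing sequence guesses `η`, and for a club of `α` the restriction `𝒜_ξ↾α` is not
locally isomorphic to `𝒜_η↾α` while `𝒜_η↾α ⊨ T`, then the images of `η` and `ξ` differ at every
correct guess in a club, hence on a stationary set. -/
lemma not_EX_of_clubEv (hκ : ℵ₀ < κ) (hreg : κ.IsRegular) [L.IsRelational]
    [∀ n, Encodable (L.Relations n)] (π : List (O κ) ≃ O κ) (T : L.Theory)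
    (e : O κ → Set (O κ × O κ)) (S : Ordinal → Set Ordinal) {X : Set Ordinal}
    (hS : ∀ A ⊆ Set.Iio κ.ord, IsStationary κ {α | α ∈ X ∧ A ∩ Set.Iio α = S α})
    (η ξ : Point κ)
    (hη : ClubEv κ fun α => RestrModel T (codedStructure κ hκ.le L π η) α)
    (hξ : ClubEv κ fun α => ¬ LocalIso T e α (codedStructure κ hκ.le L π ξ)
      (codedStructure κ hκ.le L π η)) :
    ¬ EX κ X (reduction hκ.le π T e S η) (reduction hκ.le π T e S ξ) := by
  classical
  refine not_not.2 fun C hC => ?_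
  obtain ⟨D, hD, hDP⟩ := ((ClubEv.of_isClub hκ hC).and (hη.and (hξ.and
    (clubEv_agreeBelow (L := L) hκ hreg π η)))).exists_isClub hκ hreg
  obtain ⟨α, ⟨hαX, hαS⟩, hαD⟩ := hS (Subtype.val '' (η ⁻¹' {true}))
    (by rintro _ ⟨γ, -, rfl⟩; exact γ.2) D hD
  obtain ⟨hαC, hmod, hnot, hag⟩ := hDP α hαD
  have hag := hag _ hαS
  refine ⟨α, ⟨⟨⟨α, hD.1 hαD⟩, Or.inl ⟨?_, ?_⟩, rfl⟩, hαX⟩, hαC⟩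
  · exact decide_eq_true ⟨hmod, (hag.restrModel T).1 hmod, hag.amenIso e⟩
  · intro h
    obtain ⟨h1, h2, h3⟩ := of_decide_eq_true h
    exact hnot ⟨h1, hmod, h3.trans (hag.amenIso e).symm⟩

theorem isoRel_contReducible_EX (κ : Cardinal.{0}) (hκ₁ : ℵ₀ < κ) (hκ₂ : κ ^< κ = κ)
    (X : Set Ordinal) (hX : X ⊆ Set.Iio κ.ord) (hXstat : IsStationary κ X)
    (hDiamond : Diamond κ X)
    (L : FirstOrder.Language) [L.IsRelational] [∀ n, Encodable (L.Relations n)]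
    (T : L.Theory) (hT : T.IsComplete)
    (hShelah : ∀ A B : L.Structure (O κ),
      @FirstOrder.Language.Theory.Model L (O κ) A T →
      @FirstOrder.Language.Theory.Model L (O κ) B T →
        (Nonempty (@FirstOrder.Language.Equiv L (O κ) (O κ) A B) ↔ IIWinsEF κ κ.ord A B) ∧
        (¬ Nonempty (@FirstOrder.Language.Equiv L (O κ) (O κ) A B) ↔ IWinsEF κ κ.ord A B))
    (π : List (O κ) ≃ O κ) :
    ∃ f : Point κ → Point κ,
      @Continuous _ _ (boundedTopology κ) (boundedTopology κ) f ∧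
      ∀ η ξ : Point κ, isoRel κ hκ₁.le L π T η ξ ↔ EX κ X (f η) (f ξ) := by
  have hreg := isRegular_of_powerlt hκ₁ hκ₂
  obtain ⟨S, -, hS⟩ := hDiamond
  obtain ⟨e, hsm, he⟩ := exists_enum hκ₁ hκ₂
  have : Nonempty (O κ) := ⟨⟨((0 : ℕ) : Ordinal), natCast_lt_ord hκ₁.le 0⟩⟩
  have : ∀ n, Countable (L.Relations n) := fun n => Encodable.countable
  refine ⟨reduction hκ₁.le π T e S, continuous_reduction hκ₁ hreg π T e S, fun η ξ => ?_⟩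
  have hmod : ∀ η : Point κ, ClubEv κ fun α => (RestrModel T (codedStructure κ hκ₁.le L π η) α ↔
      @FirstOrder.Language.Theory.Model L (O κ) (codedStructure κ hκ₁.le L π η) T) :=
    fun η => clubEv_restrModel hκ₁ hreg T _
  constructor
  · rintro (⟨hη, hξ, hiso⟩ | ⟨hη, hξ⟩)
    · refine EX.of_clubEv hκ₁ hreg (((hmod η).and ((hmod ξ).and
        (clubEv_amenIso hsm he hiso))).mono ?_)
      rintro _ - ⟨h1, h2, h3⟩ γ rfl
      refine decide_eq_decide.2 ?_
      unfold LocalIso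
      simp only [h1.2 hη, h2.2 hξ, true_and]
      exact and_congr_right fun _ => ⟨h3.symm.trans, h3.trans⟩
    · refine EX.of_clubEv hκ₁ hreg (((hmod η).and (hmod ξ)).mono ?_)
      rintro _ - ⟨h1, h2⟩ γ rfl
      refine decide_eq_decide.2 ?_
      unfold LocalIso
      simp only [h1, h2, hη, hξ, false_and]
  · intro hEX
    -- A model and a non-model of `T` have inequivalent images.
    have hmm : ∀ η ξ : Point κ,
        @FirstOrder.Language.Theory.Model L (O κ) (codedStructure κ hκ₁.le L π η) T →
        EX κ X (reduction hκ₁.le π T e S η) (reduction hκ₁.le π T e S ξ) →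
        @FirstOrder.Language.Theory.Model L (O κ) (codedStructure κ hκ₁.le L π ξ) T := by
      intro η ξ hη hEX
      by_contra hξ
      exact not_EX_of_clubEv hκ₁ hreg π T e S hS η ξ ((hmod η).mono fun _ _ h => h.2 hη)
        ((hmod ξ).mono fun _ _ h h' => hξ (h.1 h'.1)) hEX
    by_cases hη : @FirstOrder.Language.Theory.Model L (O κ) (codedStructure κ hκ₁.le L π η) T
    · have hξ := hmm η ξ hη hEX
      refine Or.inl ⟨hη, hξ, ?_⟩
      by_contra hiso
      have hI := ((hShelah _ _ hη hξ).2).1 hiso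
      exact not_EX_of_clubEv hκ₁ hreg π T e S hS η ξ ((hmod η).mono fun _ _ h => h.2 hη)
        ((clubEv_not_amenIso hκ₁ hreg hsm he hI).mono fun _ _ h h' => h h'.2.2.symm) hEX
    · exact Or.inr ⟨hη, fun hξ => hη (hmm ξ η hξ hEX.symm')⟩


end GenCantor
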